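/- arXiv:2006.10957 — 6 statements merged into one kernel-verified Lean document; each statement's English description precedes it below -/
import Mathlib

section
/- There exists n₀ ∈ ℕ such that for all integers n ≥ n₀ and all integers m divisible by 3 with m ≥ log₂ n the following holds. For z ∈ {0,1} let G_z be the uniform distribution on {x ∈ {0,1}^m : |x| = (1+z)·m/3}. For y ∈ {0,1}^n let G_y := G_{y₁} × ⋯ × G_{y_n} be the product distribution on ({0,1}^m)^n. For z ∈ {0,1} let F_z be the uniform distribution on {y ∈ {0,1}^n : y₁ ⊕ ⋯ ⊕ y_n = z}, let D_z := E_{y∼F_z}[G_y], and let D := (1/2)·D_0 + (1/2)·D_1. Then for every conjunction C on {0,1}^{nm} of width at most (1/14)·n·log₂ n with C(D) > 0, one has (2/3)·C(D) < C(D_1) < (4/3)·C(D). -/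
open Finset

/-- Hamming weight of `x : Fin k → Bool`. -/
def hammingWt {k : ℕ} (x : Fin k → Bool) : ℕ := #{i : Fin k | x i = true}

/-- The uniform probability mass function on a finite set `S`. -/
noncomputable def uniformOn {α : Type*} [DecidableEq α] (S : Finset α) : α → ℝ :=
  fun a => if a ∈ S then (1 : ℝ) / S.card else 0

/-- `G_z`: the uniform distribution on `{x ∈ {0,1}^m : |x| = (1+z)·m/3}`
(the hard distribution for GapMaj). -/
noncomputable def gapMajDist (m : ℕ) (z : Bool) : (Fin m → Bool) → ℝ :=
  uniformOn ({x : Fin m → Bool | hammingWt x = (if z then 2 else 1) * (m / 3)} : Finset _)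

/-- `D_z = E_{y ∼ F_z}[G_{y₁} × ⋯ × G_{y_n}]`, where `F_z` is the uniform distribution
on strings `y ∈ {0,1}^n` of parity `z`. -/
noncomputable def xorMixDist (n m : ℕ) (z : Bool) : (Fin n → Fin m → Bool) → ℝ :=
  fun X =>
    (∑ y ∈ ({y : Fin n → Bool | hammingWt y % 2 = (if z then 1 else 0)} : Finset _),
        ∏ i, gapMajDist m (y i) (X i)) /
      (#{y : Fin n → Bool | hammingWt y % 2 = (if z then 1 else 0)} : ℝ)

/-- `C(D)`: the probability, under the distribution (mass function) `D` on
`({0,1}^m)^n ≅ {0,1}^{nm}`, that the conjunction with positive literals `P` and negative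
literals `N` is satisfied. -/
noncomputable def conjProb {n m : ℕ} (P N : Finset (Fin n × Fin m))
    (D : (Fin n → Fin m → Bool) → ℝ) : ℝ :=
  ∑ X ∈ ({X : Fin n → Fin m → Bool |
      (∀ p ∈ P, X p.1 p.2 = true) ∧ (∀ p ∈ N, X p.1 p.2 = false)} : Finset _), D X

/-!
Write `p i z` for the probability that a sample from `G_z` satisfies the literals of `C` lying in
the `i`-th block. Then `C(D₀) + C(D₁)` and `C(D₀) - C(D₁)` are, up to the same factor, the products
over `i` of `p i 0 + p i 1` and of `p i 0 - p i 1`. If `w` literals lie in block `i`, then `p i 0`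
and `p i 1` are proportional to nearby binomial coefficients and differ by a factor of at most
`4 ^ w`. By averaging, at least half of the blocks have `w ≤ (log₂ n) / 7`, so `4 ^ w ≤ √n`, and
each of these shrinks the difference by a factor `1 - 1 / √n` relative to the sum. Since
`(1 - 1 / √n) ^ (n / 2)` tends to `0`, the difference is eventually below a third of the sum.
-/

section Preliminaries

variable {α β : Type*}

theorem choose_add_le_pow_mul_choose {n k c : ℕ} (d : ℕ) (h : n - k ≤ c * (k + 1)) :
    n.choose (k + d) ≤ c ^ d * n.choose k := by
  induction d with
  | zero => simp
  | succ d ih =>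
    have hratio : n - (k + d) ≤ c * (k + d + 1) := by
      calc n - (k + d) ≤ n - k := by lia
        _ ≤ c * (k + 1) := h
        _ ≤ c * (k + d + 1) := by gcongr; lia
    have hstep : n.choose (k + d + 1) ≤ c * n.choose (k + d) := by
      refine Nat.le_of_mul_le_mul_right ?_ (k + d).succ_pos
      calc n.choose (k + d + 1) * (k + d + 1) = n.choose (k + d) * (n - (k + d)) :=
            Nat.choose_succ_right_eq n (k + d)
        _ ≤ n.choose (k + d) * (c * (k + d + 1)) := by gcongr
        _ = c * n.choose (k + d) * (k + d + 1) := by ring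
    calc n.choose (k + d + 1) ≤ c * n.choose (k + d) := hstep
      _ ≤ c * (c ^ d * n.choose k) := by gcongr
      _ = c ^ (d + 1) * n.choose k := by ring

theorem choose_le_pow_dist_mul_choose {n a b c : ℕ} (hb : b ≤ n) (hup : n - b ≤ c * (b + 1))
    (hdown : b ≤ c * (n - b + 1)) : n.choose a ≤ c ^ a.dist b * n.choose b := by
  rcases le_total b a with hba | hab
  · rw [Nat.dist_eq_sub_of_le_right hba]
    simpa only [Nat.add_sub_cancel' hba] using choose_add_le_pow_mul_choose (a - b) hup
  · rw [Nat.dist_eq_sub_of_le hab, ← Nat.choose_symm hb, ← Nat.choose_symm (hab.trans hb),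
      show n - a = n - b + (b - a) by lia]
    exact choose_add_le_pow_mul_choose _ (by rwa [Nat.sub_sub_self hb])

theorem card_filter_Icc_card_eq [DecidableEq α] {s t : Finset α} {k : ℕ} (hst : s ⊆ t)
    (hk : #s ≤ k) : #{u ∈ Icc s t | #u = k} = (#t - #s).choose (k - #s) := by
  have himage : ({u ∈ Icc s t | #u = k} : Finset (Finset α)) =
      (powersetCard (k - #s) (t \ s)).image (s ∪ ·) := by
    ext u
    simp only [mem_filter, mem_Icc, mem_image, mem_powersetCard]
    constructor
    · rintro ⟨⟨hsu, hut⟩, rfl⟩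
      exact ⟨u \ s, ⟨sdiff_subset_sdiff hut le_rfl, card_sdiff_of_subset hsu⟩,
        union_sdiff_of_subset hsu⟩
    · rintro ⟨v, ⟨hvt, hv⟩, rfl⟩
      have hsv : Disjoint s v := disjoint_sdiff.mono_right hvt
      refine ⟨⟨subset_union_left, union_subset hst (hvt.trans sdiff_subset)⟩, ?_⟩
      rw [card_union_of_disjoint hsv, hv, Nat.add_sub_cancel' hk]
  rw [himage, card_image_of_injOn, card_powersetCard, card_sdiff_of_subset hst]
  intro u hu v hv huv
  have hsu : Disjoint s u := disjoint_sdiff.mono_right (mem_powersetCard.1 hu).1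
  have hsv : Disjoint s v := disjoint_sdiff.mono_right (mem_powersetCard.1 hv).1
  rw [← union_sdiff_cancel_left hsu, ← union_sdiff_cancel_left hsv]
  exact congrArg (· \ s) huv

theorem abs_sub_le_one_sub_inv_mul_add {𝕜 : Type*} [Field 𝕜] [LinearOrder 𝕜] [IsStrictOrderedRing 𝕜]
    {a b K : 𝕜} (ha : 0 ≤ a) (hb : 0 ≤ b) (hK : 1 ≤ K) (hab : a ≤ K * b) (hba : b ≤ K * a) :
    |a - b| ≤ (1 - K⁻¹) * (a + b) := by
  have hK₀ : 0 < K := one_pos.trans_le hK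
  have hinv : K⁻¹ ≤ 1 := inv_le_one_of_one_le₀ hK
  have ha' : K⁻¹ * a ≤ b := (inv_mul_le_iff₀ hK₀).2 hab
  have hb' : K⁻¹ * b ≤ a := (inv_mul_le_iff₀ hK₀).2 hba
  have ha₁ : K⁻¹ * a ≤ a := mul_le_of_le_one_left ha hinv
  have hb₁ : K⁻¹ * b ≤ b := mul_le_of_le_one_left hb hinv
  rw [abs_sub_le_iff]
  constructor <;> linarith

theorem abs_prod_le_pow_card_mul_prod [Fintype α] {R : Type*} [CommRing R] [LinearOrder R]
    [IsStrictOrderedRing R] {f g : α → R} {r : R} (s : Finset α) (hf : ∀ i, |f i| ≤ g i)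
    (hs : ∀ i ∈ s, |f i| ≤ r * g i) : |∏ i, f i| ≤ r ^ #s * ∏ i, g i := by
  classical
  calc |∏ i, f i| = ∏ i, |f i| := abs_prod _ _
    _ ≤ ∏ i, (if i ∈ s then r else 1) * g i :=
      prod_le_prod (fun _ _ ↦ abs_nonneg _) fun i _ ↦ by
        split_ifs with hi
        · exact hs i hi
        · simpa only [one_mul] using hf i
    _ = r ^ #s * ∏ i, g i := by
      rw [prod_mul_distrib, Fintype.prod_ite_mem, prod_const]

theorem one_sub_pow_le_inv_one_add_mul {𝕜 : Type*} [Field 𝕜] [LinearOrder 𝕜] [IsStrictOrderedRing 𝕜]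
    {s : 𝕜} (hs₀ : 0 ≤ s) (hs₁ : s ≤ 1) (k : ℕ) :
    (1 - s) ^ k ≤ (1 + k * s)⁻¹ := by
  rw [← one_div, le_div_iff₀ (by positivity)]
  calc (1 - s) ^ k * (1 + k * s) ≤ (1 - s) ^ k * (1 + s) ^ k := by
        gcongr
        exact one_add_mul_le_pow (by linarith) k
    _ = (1 - s ^ 2) ^ k := by rw [← mul_pow]; ring
    _ ≤ 1 := pow_le_one₀ (sub_nonneg.2 (pow_le_one₀ hs₀ hs₁)) (sub_le_self 1 (sq_nonneg s))

theorem one_sub_inv_sqrt_pow_lt_third {x : ℝ} {k : ℕ} (hx : 36 ≤ x) (hk : x / 2 ≤ k) :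
    (1 - (√x)⁻¹) ^ k < 1 / 3 := by
  have hsqrt : 6 ≤ √x := Real.le_sqrt_of_sq_le (by linarith)
  have hthree : 3 ≤ k * (√x)⁻¹ :=
    calc 3 ≤ √x / 2 := by linarith
      _ = x / 2 * (√x)⁻¹ := by rw [div_mul_eq_mul_div, ← div_eq_mul_inv, Real.div_sqrt]
      _ ≤ k * (√x)⁻¹ := by gcongr
  calc (1 - (√x)⁻¹) ^ k ≤ (1 + k * (√x)⁻¹)⁻¹ :=
        one_sub_pow_le_inv_one_add_mul (by positivity) (inv_le_one_of_one_le₀ (by linarith)) k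
    _ ≤ 4⁻¹ := by gcongr; linarith
    _ < 1 / 3 := by norm_num

theorem card_div_two_le_card_filter_le [Fintype α] {𝕜 : Type*} [Field 𝕜] [LinearOrder 𝕜]
    [IsStrictOrderedRing 𝕜] {w : α → 𝕜} {L : 𝕜} (hw : ∀ i, 0 ≤ w i) (hL : 0 < L)
    (hsum : ∑ i, w i ≤ Fintype.card α * L / 2) :
    (Fintype.card α : 𝕜) / 2 ≤ #{i | w i ≤ L} := by
  have hmarkov : #{i | ¬ w i ≤ L} * L ≤ ∑ i, w i :=
    calc #{i | ¬ w i ≤ L} * L = ∑ i with ¬ w i ≤ L, L := by rw [sum_const, nsmul_eq_mul]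
      _ ≤ ∑ i with ¬ w i ≤ L, w i := sum_le_sum fun i hi ↦ (not_le.1 (mem_filter.1 hi).2).le
      _ ≤ ∑ i, w i := sum_le_univ_sum_of_nonneg hw
  have hfew : (#{i | ¬ w i ≤ L} : 𝕜) ≤ Fintype.card α / 2 :=
    le_of_mul_le_mul_right (by linarith) hL
  have hcard : (#{i | w i ≤ L} : 𝕜) + #{i | ¬ w i ≤ L} = Fintype.card α :=
    mod_cast card_filter_add_card_filter_not (s := univ) fun i ↦ w i ≤ L
  linarith

theorem four_pow_le_sqrt {x : ℝ} {w : ℕ} (hx : 0 < x) (hw : 4 * w ≤ Real.logb 2 x) :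
    4 ^ w ≤ √x := by
  refine Real.le_sqrt_of_sq_le ?_
  calc ((4 : ℝ) ^ w) ^ 2 = 2 ^ (4 * w) := by
        rw [← pow_mul, show (4 : ℝ) = 2 ^ 2 by norm_num, ← pow_mul]; ring
    _ = (2 : ℝ) ^ (4 * w : ℝ) := by rw [← Real.rpow_natCast]; push_cast; rfl
    _ ≤ x := (Real.le_logb_iff_rpow_le one_lt_two hx).1 hw

/-- The section of `P` above `a`; for the literals of a conjunction on `{0,1}^{nm}`, those in the
block `a`. -/
def row [Fintype β] [DecidableEq α] [DecidableEq β] (P : Finset (α × β)) (a : α) : Finset β :=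
  {b | (a, b) ∈ P}

theorem sum_card_row [Fintype α] [Fintype β] [DecidableEq α] [DecidableEq β]
    (P : Finset (α × β)) : ∑ a, #(row P a) = #P := by
  simp only [row, card_filter]
  rw [← Fintype.sum_prod_type' fun a b ↦ if (a, b) ∈ P then 1 else 0]
  simp

theorem disjoint_row [Fintype β] [DecidableEq α] [DecidableEq β] {P N : Finset (α × β)}
    (hPN : Disjoint P N) (a : α) : Disjoint (row P a) (row N a) := by
  rw [disjoint_left] at hPN ⊢
  intro b hP hN
  exact hPN (mem_filter.1 hP).2 (mem_filter.1 hN).2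

theorem sum_uniformOn [DecidableEq α] (S T : Finset α) :
    ∑ a ∈ T, uniformOn S a = (#{a ∈ T | a ∈ S} : ℝ) / #S := by
  simp only [uniformOn, ← sum_filter, sum_const, nsmul_eq_mul, mul_one_div]

end Preliminaries

section Parity

variable {n : ℕ}

/-- The strings `y ∈ {0,1}^n` with `y₁ ⊕ ⋯ ⊕ y_n = z`. -/
def parityStrings (n : ℕ) (z : Bool) : Finset (Fin n → Bool) :=
  {y | hammingWt y % 2 = if z then 1 else 0}

theorem sum_parityStrings_add {M : Type*} [AddCommMonoid M] (F : (Fin n → Bool) → M) :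
    ∑ y ∈ parityStrings n false, F y + ∑ y ∈ parityStrings n true, F y = ∑ y, F y := by
  simpa only [parityStrings, Bool.false_eq_true, if_true, if_false, Nat.mod_two_ne_zero] using
    sum_filter_add_sum_filter_not univ (fun y : Fin n → Bool ↦ hammingWt y % 2 = 0) F

theorem sum_parityStrings_sub {R : Type*} [CommRing R] (F : (Fin n → Bool) → R) :
    ∑ y ∈ parityStrings n false, F y - ∑ y ∈ parityStrings n true, F y =
      ∑ y, (-1) ^ hammingWt y * F y := by
  rw [← sum_parityStrings_add, sub_eq_add_neg, ← sum_neg_distrib]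
  congr 1 <;> refine sum_congr rfl fun y hy ↦ ?_
  · have heven : Even (hammingWt y) := Nat.even_iff.2 (mem_filter.1 hy).2
    rw [heven.neg_one_pow, one_mul]
  · have hodd : Odd (hammingWt y) := Nat.odd_iff.2 (mem_filter.1 hy).2
    rw [hodd.neg_one_pow, neg_one_mul]

theorem sum_parityStrings_prod_add {R : Type*} [CommSemiring R] (f : Fin n → Bool → R) :
    ∑ y ∈ parityStrings n false, ∏ i, f i (y i) + ∑ y ∈ parityStrings n true, ∏ i, f i (y i) =
      ∏ i, (f i false + f i true) := by
  simp only [sum_parityStrings_add, ← Fintype.prod_sum, Fintype.sum_bool, add_comm]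

theorem sum_parityStrings_prod_sub {R : Type*} [CommRing R] (f : Fin n → Bool → R) :
    ∑ y ∈ parityStrings n false, ∏ i, f i (y i) - ∑ y ∈ parityStrings n true, ∏ i, f i (y i) =
      ∏ i, (f i false - f i true) := by
  have hsign (y : Fin n → Bool) : (-1) ^ hammingWt y * ∏ i, f i (y i) =
      ∏ i, (if y i then -1 else 1) * f i (y i) := by
    rw [prod_mul_distrib, prod_ite, prod_const_one, mul_one, prod_const, hammingWt]
  rw [sum_parityStrings_sub]
  simp only [hsign, ← Fintype.prod_sum (fun i b ↦ (if b then -1 else 1) * f i b),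
    Fintype.sum_bool, if_true, Bool.false_eq_true, if_false, one_mul, neg_one_mul,
    neg_add_eq_sub]

theorem card_parityStrings (hn : 0 < n) (z : Bool) : #(parityStrings n z) = 2 ^ (n - 1) := by
  have hadd := sum_parityStrings_prod_add (n := n) (R := ℤ) fun _ _ ↦ 1
  have hsub := sum_parityStrings_prod_sub (n := n) (R := ℤ) fun _ _ ↦ 1
  simp only [prod_const, one_pow, sum_const, nsmul_eq_mul, mul_one, card_univ, Fintype.card_fin,
    sub_self, zero_pow hn.ne', one_add_one_eq_two] at hadd hsub
  have hpow : (2 : ℤ) ^ n = 2 * 2 ^ (n - 1) := (mul_pow_sub_one hn.ne' 2).symm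
  have : (#(parityStrings n z) : ℤ) = 2 ^ (n - 1) := by cases z <;> linarith
  exact_mod_cast this

end Parity

section Block

variable {m : ℕ} {P N : Finset (Fin m)}

/-- The assignments satisfying the conjunction with positive literals `P` and negative literals
`N`. -/
def subcube {ι : Type*} [Fintype ι] [DecidableEq ι] (P N : Finset ι) : Finset (ι → Bool) :=
  {x | (∀ i ∈ P, x i = true) ∧ ∀ i ∈ N, x i = false}

theorem mem_subcube_iff_mem_Icc {ι : Type*} [Fintype ι] [DecidableEq ι] {P N : Finset ι}
    {x : ι → Bool} : x ∈ subcube P N ↔ ({i | x i = true} : Finset ι) ∈ Icc P Nᶜ := by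
  simp only [subcube, mem_filter, mem_univ, true_and, mem_Icc, subset_iff, mem_compl]
  grind

theorem card_subcube_hammingWt_eq (hPN : Disjoint P N) {k : ℕ} (hk : #P ≤ k) :
    #{x ∈ subcube P N | hammingWt x = k} = (m - (#P + #N)).choose (k - #P) := by
  have hsubsets : #{x ∈ subcube P N | hammingWt x = k} = #{s ∈ Icc P Nᶜ | #s = k} := by
    refine card_nbij' (fun x ↦ ({i | x i = true} : Finset (Fin m))) (fun s i ↦ decide (i ∈ s))
      (fun x hx ↦ ?_) (fun s hs ↦ ?_) (fun x _ ↦ by simp) fun s _ ↦ by simp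
    · rw [mem_coe, mem_filter, mem_subcube_iff_mem_Icc] at hx
      exact mem_filter.2 hx
    · rw [mem_coe, mem_filter] at hs ⊢
      simpa only [mem_subcube_iff_mem_Icc, hammingWt, decide_eq_true_eq, filter_univ_mem] using hs
  rw [hsubsets, card_filter_Icc_card_eq (subset_compl_iff_disjoint_right.2 hPN) hk, card_compl,
    Fintype.card_fin, Nat.sub_sub, add_comm #N]

theorem card_hammingWt_eq (m k : ℕ) : #{x : Fin m → Bool | hammingWt x = k} = m.choose k := by
  simpa [subcube] using card_subcube_hammingWt_eq (disjoint_empty_left (∅ : Finset (Fin m)))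
    k.zero_le

/-- The probability that a sample from `G_z` satisfies the conjunction on a single block with
positive literals `P` and negative literals `N`. -/
noncomputable def blockProb (P N : Finset (Fin m)) (z : Bool) : ℝ :=
  ∑ x ∈ subcube P N, gapMajDist m z x

theorem blockProb_nonneg (P N : Finset (Fin m)) (z : Bool) : 0 ≤ blockProb P N z := by
  rw [blockProb, gapMajDist, sum_uniformOn]
  positivity

theorem blockProb_eq_choose_div_choose (hPN : Disjoint P N) {z : Bool} {k : ℕ}
    (hk : (if z then 2 else 1) * (m / 3) = k) (hP : #P ≤ k) :
    blockProb P N z = ((m - (#P + #N)).choose (k - #P) : ℝ) / m.choose k := by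
  simp only [blockProb, gapMajDist, sum_uniformOn, hk, mem_filter, mem_univ, true_and,
    card_hammingWt_eq, card_subcube_hammingWt_eq hPN hP]

theorem blockProb_true_eq_swap (hm : 3 ∣ m) (hPN : Disjoint P N) (hP : #P ≤ m / 3)
    (hN : #N ≤ m / 3) : blockProb P N true = blockProb N P false := by
  rw [blockProb_eq_choose_div_choose hPN (k := 2 * (m / 3)) rfl (by lia),
    blockProb_eq_choose_div_choose hPN.symm (one_mul _) hN, add_comm #N,
    Nat.choose_symm_of_eq_add (show m - (#P + #N) = 2 * (m / 3) - #P + (m / 3 - #N) by lia),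
    Nat.choose_symm_of_eq_add (show m = 2 * (m / 3) + m / 3 by lia)]

theorem blockProb_false_le_four_pow_mul_swap (hPN : Disjoint P N) (hw : 2 * (#P + #N) ≤ m / 3) :
    blockProb P N false ≤ 4 ^ (#P + #N) * blockProb N P false := by
  -- All lower indices from `m / 3 - #P` to `m / 3 - #N` stay between a fifth and four fifths of the
  -- upper index, where consecutive binomial coefficients differ by a factor of at most `4`.
  have hchoose : (m - (#P + #N)).choose (m / 3 - #P) ≤
      4 ^ (#P + #N) * (m - (#P + #N)).choose (m / 3 - #N) :=
    calc (m - (#P + #N)).choose (m / 3 - #P)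
        ≤ 4 ^ (m / 3 - #P).dist (m / 3 - #N) * (m - (#P + #N)).choose (m / 3 - #N) :=
          choose_le_pow_dist_mul_choose (by lia) (by lia) (by lia)
      _ ≤ 4 ^ (#P + #N) * (m - (#P + #N)).choose (m / 3 - #N) := by
          gcongr
          · simp
          · unfold Nat.dist; lia
  rw [blockProb_eq_choose_div_choose hPN (one_mul _) (by lia),
    blockProb_eq_choose_div_choose hPN.symm (one_mul _) (by lia), add_comm #N, ← mul_div_assoc]
  gcongr
  exact_mod_cast hchoose

theorem blockProb_le_four_pow_mul (hm : 3 ∣ m) (hPN : Disjoint P N)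
    (hw : 2 * (#P + #N) ≤ m / 3) (y z : Bool) :
    blockProb P N y ≤ 4 ^ (#P + #N) * blockProb P N z := by
  have htrue : blockProb P N true = blockProb N P false :=
    blockProb_true_eq_swap hm hPN (by lia) (by lia)
  have hrefl (b : Bool) : blockProb P N b ≤ 4 ^ (#P + #N) * blockProb P N b :=
    le_mul_of_one_le_left (blockProb_nonneg P N b) (one_le_pow₀ (by norm_num))
  match y, z with
  | false, false => exact hrefl false
  | true, true => exact hrefl true
  | false, true => exact htrue ▸ blockProb_false_le_four_pow_mul_swap hPN hw
  | true, false =>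
    rw [htrue, add_comm #P]
    exact blockProb_false_le_four_pow_mul_swap hPN.symm (by lia)

end Block

section Conjunction

variable {n m : ℕ}

theorem conjProb_prod (P N : Finset (Fin n × Fin m)) (D : Fin n → (Fin m → Bool) → ℝ) :
    conjProb P N (fun X ↦ ∏ i, D i (X i)) =
      ∏ i, ∑ x ∈ subcube (row P i) (row N i), D i x := by
  rw [prod_univ_sum, conjProb]
  refine sum_congr ?_ fun _ _ ↦ rfl
  ext X
  simp only [mem_filter, mem_univ, true_and, Fintype.mem_piFinset, subcube, row, Prod.forall,
    forall_and]

theorem conjProb_half_add (P N : Finset (Fin n × Fin m)) (D E : (Fin n → Fin m → Bool) → ℝ) :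
    conjProb P N (fun X ↦ (D X + E X) / 2) = (conjProb P N D + conjProb P N E) / 2 := by
  simp only [conjProb, ← sum_div, sum_add_distrib]

theorem conjProb_xorMixDist (hn : 0 < n) (P N : Finset (Fin n × Fin m)) (z : Bool) :
    conjProb P N (xorMixDist n m z) =
      (∑ y ∈ parityStrings n z, ∏ i, blockProb (row P i) (row N i) (y i)) / 2 ^ (n - 1) := by
  have hcard : (#(parityStrings n z) : ℝ) = 2 ^ (n - 1) := mod_cast card_parityStrings hn z
  calc conjProb P N (xorMixDist n m z)
      = (∑ y ∈ parityStrings n z, conjProb P N fun X ↦ ∏ i, gapMajDist m (y i) (X i)) /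
          #(parityStrings n z) := by
        simp only [conjProb, xorMixDist, parityStrings, ← sum_div]
        rw [sum_comm]
    _ = _ := by simp only [conjProb_prod, hcard, blockProb]

/-- The number of literals in the block `i` of the conjunction with positive literals `P` and
negative literals `N`. -/
def blockWidth (P N : Finset (Fin n × Fin m)) (i : Fin n) : ℕ := #(row P i) + #(row N i)

theorem card_div_two_le_card_blockWidth_le {P N : Finset (Fin n × Fin m)} {L : ℝ} (hL : 0 < L)
    (hw : (#P : ℝ) + #N ≤ n * L / 2) : (n : ℝ) / 2 ≤ #{i | (blockWidth P N i : ℝ) ≤ L} := by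
  have hsum : ∑ i, (blockWidth P N i : ℝ) = #P + #N := by
    simp only [blockWidth, Nat.cast_add, sum_add_distrib, ← Nat.cast_sum, sum_card_row]
  simpa only [Fintype.card_fin] using card_div_two_le_card_filter_le
    (w := fun i ↦ (blockWidth P N i : ℝ)) (fun _ ↦ Nat.cast_nonneg _) hL
    (by rwa [hsum, Fintype.card_fin])

theorem abs_conjProb_sub_le (hn : 0 < n) (hm : 3 ∣ m) {P N : Finset (Fin n × Fin m)}
    (hPN : Disjoint P N) {K : ℝ} (hK : 1 ≤ K) (s : Finset (Fin n))
    (hs : ∀ i ∈ s, 4 ^ blockWidth P N i ≤ K ∧ 2 * blockWidth P N i ≤ m / 3) :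
    |conjProb P N (xorMixDist n m false) - conjProb P N (xorMixDist n m true)| ≤
      (1 - K⁻¹) ^ #s *
        (conjProb P N (xorMixDist n m false) + conjProb P N (xorMixDist n m true)) := by
  simp only [conjProb_xorMixDist hn, ← sub_div, ← add_div,
    sum_parityStrings_prod_sub (fun i ↦ blockProb (row P i) (row N i)),
    sum_parityStrings_prod_add (fun i ↦ blockProb (row P i) (row N i)), abs_div, ← mul_div_assoc,
    abs_of_pos (pow_pos (zero_lt_two' ℝ) (n - 1))]
  gcongr
  have hnonneg i z := blockProb_nonneg (row P i) (row N i) z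
  refine abs_prod_le_pow_card_mul_prod s (fun i ↦ ?_) fun i hi ↦ ?_
  · rw [abs_sub_le_iff]
    constructor <;> linarith [hnonneg i false, hnonneg i true]
  · obtain ⟨hwK, hwm⟩ := hs i hi
    have hratio y z : blockProb (row P i) (row N i) y ≤ K * blockProb (row P i) (row N i) z :=
      (blockProb_le_four_pow_mul hm (disjoint_row hPN i) hwm y z).trans
        (mul_le_mul_of_nonneg_right hwK (hnonneg i z))
    exact abs_sub_le_one_sub_inv_mul_add (hnonneg _ _) (hnonneg _ _) hK (hratio _ _) (hratio _ _)

end Conjunction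

/-- core of Theorem 1.2, `XOR ∘ GapMaj`. There is `n₀` such that for all
`n ≥ n₀` and all `m` divisible by 3 with `m ≥ log₂ n`: for every conjunction `C` on
`{0,1}^{nm}` of width at most `(1/14)·n·log₂ n` with `C(D) > 0`, where
`D = (1/2)·D₀ + (1/2)·D₁`, one has `(2/3)·C(D) < C(D₁) < (4/3)·C(D)`. -/
theorem stmt_0 :
    ∃ n₀ : ℕ, ∀ n m : ℕ, n₀ ≤ n → 3 ∣ m → Real.logb 2 n ≤ (m : ℝ) →
      ∀ P N : Finset (Fin n × Fin m), Disjoint P N →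
      ((P.card : ℝ) + (N.card : ℝ) ≤ (1 / 14) * n * Real.logb 2 n) →
      0 < conjProb P N (fun X => (xorMixDist n m false X + xorMixDist n m true X) / 2) →
      (2 / 3) * conjProb P N (fun X => (xorMixDist n m false X + xorMixDist n m true X) / 2)
          < conjProb P N (xorMixDist n m true) ∧
        conjProb P N (xorMixDist n m true)
          < (4 / 3) * conjProb P N
              (fun X => (xorMixDist n m false X + xorMixDist n m true X) / 2) := by
  refine ⟨36, fun n m hn hm hnm P N hPN hw hpos ↦ ?_⟩
  have hn' : (36 : ℝ) ≤ n := mod_cast hn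
  have hlog : 0 < Real.logb 2 n := Real.logb_pos one_lt_two (by linarith)
  let light : Finset (Fin n) := {i | (blockWidth P N i : ℝ) ≤ Real.logb 2 n / 7}
  have hcard : (n : ℝ) / 2 ≤ #light :=
    card_div_two_le_card_blockWidth_le (by positivity) (by linarith)
  have hlight : ∀ i ∈ light, 4 ^ blockWidth P N i ≤ √(n : ℝ) ∧ 2 * blockWidth P N i ≤ m / 3 := by
    intro i hi
    have hi : (blockWidth P N i : ℝ) ≤ Real.logb 2 n / 7 := (mem_filter.1 hi).2
    have hwm : 7 * blockWidth P N i ≤ m := by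
      exact_mod_cast (by linarith : 7 * (blockWidth P N i : ℝ) ≤ m)
    exact ⟨four_pow_le_sqrt (by linarith) (by linarith), by lia⟩
  have hbias := abs_conjProb_sub_le (by lia) hm hPN (Real.one_le_sqrt.2 (by linarith)) light hlight
  rw [conjProb_half_add] at hpos ⊢
  have hlt := hbias.trans_lt
    (mul_lt_mul_of_pos_right (one_sub_inv_sqrt_pow_lt_third hn' hcard) (by linarith))
  rw [abs_sub_lt_iff] at hlt
  constructor <;> linarith
end

section
/- Let m be a positive integer divisible by 3, and let P, N ⊆ [m] be disjoint sets with |P| + |N| = w ≤ m/7. Then for each z ∈ {0,1}: |{A ⊆ [m] : |A| = (1+z)·m/3, P ⊆ A, A ∩ N = ∅}| ≤ 3^w · |{A ⊆ [m] : |A| = (2−z)·m/3, P ⊆ A, A ∩ N = ∅}|. Equivalently, if G_z denotes the uniform distribution on {x ∈ {0,1}^m : |x| = (1+z)·m/3} and C is the conjunction with positive literal set P and negative literal set N, then C(G_z) ≤ 3^w · C(G_{1−z}) for each z ∈ {0,1}. -/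
open Finset

/-!
Write `(x)_j` for the falling factorial. For `k + l = m`, a uniformly random `k`-subset of `[m]`
contains `P` and avoids `N` with probability `(k)_{|P|} (l)_{|N|} / (m)_{|P| + |N|}`. Replacing `k`
by `l` swaps the roles of `k` and `l` in the numerator and leaves `binom(m, k)` unchanged, so only
`(k)_{|P|} / (l)_{|P|}` and `(l)_{|N|} / (k)_{|N|}` have to be bounded, factor by factor.
For `{k, l} = {m / 3, 2m / 3}` each factor is at most `3`, because
`2m / 3 - i ≤ 3 (m / 3 - i)` as long as `i ≤ m / 6`.
-/

theorem descFactorial_le_pow_mul_descFactorial {c k l n : ℕ}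
    (h : ∀ i < n, l - i ≤ c * (k - i)) :
    l.descFactorial n ≤ c ^ n * k.descFactorial n := by
  simp only [Nat.descFactorial_eq_prod_range]
  calc ∏ i ∈ range n, (l - i)
      ≤ ∏ i ∈ range n, c * (k - i) := prod_le_prod' fun i hi ↦ h i (mem_range.1 hi)
    _ = c ^ n * ∏ i ∈ range n, (k - i) := by rw [prod_mul_distrib, prod_const, card_range]

theorem choose_mul_descFactorial_add {k l p n : ℕ} (hp : p ≤ k) (hn : n ≤ l) :
    (k + l - (p + n)).choose (k - p) * (k + l).descFactorial (p + n) =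
      (k + l).choose k * (k.descFactorial p * l.descFactorial n) := by
  have hchoose : (k + l - (p + n)).choose (k - p) * (k - p).factorial * (l - n).factorial =
      (k + l - (p + n)).factorial := by
    rw [show l - n = k + l - (p + n) - (k - p) by omega]
    exact Nat.choose_mul_factorial_mul_factorial (by omega)
  refine Nat.eq_of_mul_eq_mul_right (mul_pos (k - p).factorial_pos (l - n).factorial_pos) ?_
  calc (k + l - (p + n)).choose (k - p) * (k + l).descFactorial (p + n) *
          ((k - p).factorial * (l - n).factorial)
      = (k + l - (p + n)).factorial * (k + l).descFactorial (p + n) := by rw [← hchoose]; ring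
    _ = (k + l).factorial := Nat.factorial_mul_descFactorial (add_le_add hp hn)
    _ = (k + l).choose k * k.factorial * l.factorial := by
        rw [Nat.choose_symm_add, Nat.add_choose_mul_factorial_mul_factorial]
    _ = (k + l).choose k * (k.descFactorial p * l.descFactorial n) *
          ((k - p).factorial * (l - n).factorial) := by
        rw [← Nat.factorial_mul_descFactorial hp, ← Nat.factorial_mul_descFactorial hn]; ring

section SubcubeLayer

variable {α : Type*} [Fintype α] [DecidableEq α] {P N : Finset α} {k l : ℕ}

/-- The points of Hamming weight `k` satisfying the conjunction with positive literals `P` and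
negative literals `N`, each point of the cube being identified with its support. -/
def subcubeLayer (P N : Finset α) (k : ℕ) : Finset (Finset α) :=
  {A | #A = k ∧ P ⊆ A ∧ Disjoint A N}

theorem mem_subcubeLayer {A : Finset α} :
    A ∈ subcubeLayer P N k ↔ #A = k ∧ P ⊆ A ∧ Disjoint A N := by
  simp only [subcubeLayer, mem_filter_univ]

theorem subcubeLayer_eq_empty_of_lt_card_pos (h : k < #P) : subcubeLayer P N k = ∅ :=
  eq_empty_of_forall_notMem fun _ hA ↦
    let ⟨hcard, hP, _⟩ := mem_subcubeLayer.1 hA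
    (card_le_card hP).not_gt (hcard ▸ h)

theorem subcubeLayer_eq_empty_of_lt_card_neg (hkl : k + l = Fintype.card α) (h : l < #N) :
    subcubeLayer P N k = ∅ :=
  eq_empty_of_forall_notMem fun A hA ↦ by
    obtain ⟨hcard, -, hN⟩ := mem_subcubeLayer.1 hA
    have := card_union_of_disjoint hN ▸ card_le_univ (A ∪ N)
    omega

theorem card_subcubeLayer (hdisj : Disjoint P N) (hk : #P ≤ k) :
    #(subcubeLayer P N k) = (Fintype.card α - (#P + #N)).choose (k - #P) := by
  rw [← card_union_of_disjoint hdisj, ← card_compl, ← card_powersetCard]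
  have disjoint_of_subset {B : Finset α} (hB : B ⊆ (P ∪ N)ᶜ) : Disjoint B P ∧ Disjoint B N :=
    disjoint_union_right.1 (subset_compl_iff_disjoint_right.1 hB)
  refine card_nbij' (· \ P) (· ∪ P) (fun A hA ↦ ?_) (fun B hB ↦ ?_) (fun A hA ↦ ?_) fun B hB ↦ ?_
  · obtain ⟨hcard, hP, hN⟩ := mem_subcubeLayer.1 hA
    refine mem_powersetCard.2 ⟨?_, by rw [card_sdiff_of_subset hP, hcard]⟩
    exact subset_compl_iff_disjoint_right.2
      (disjoint_union_right.2 ⟨sdiff_disjoint, hN.mono_left sdiff_subset⟩)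
  · obtain ⟨hB, hcard⟩ := mem_powersetCard.1 hB
    obtain ⟨hBP, hBN⟩ := disjoint_of_subset hB
    refine mem_subcubeLayer.2 ⟨?_, subset_union_right, disjoint_union_left.2 ⟨hBN, hdisj⟩⟩
    rw [card_union_of_disjoint hBP, hcard, Nat.sub_add_cancel hk]
  · exact sdiff_union_of_subset (mem_subcubeLayer.1 hA).2.1
  · exact union_sdiff_cancel_right (disjoint_of_subset (mem_powersetCard.1 hB).1).1

theorem card_subcubeLayer_mul_descFactorial (hdisj : Disjoint P N)
    (hkl : k + l = Fintype.card α) :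
    #(subcubeLayer P N k) * (k + l).descFactorial (#P + #N) =
      (k + l).choose k * (k.descFactorial #P * l.descFactorial #N) := by
  rcases lt_or_ge k #P with hP | hP
  · simp [subcubeLayer_eq_empty_of_lt_card_pos hP, Nat.descFactorial_of_lt hP]
  rcases lt_or_ge l #N with hN | hN
  · simp [subcubeLayer_eq_empty_of_lt_card_neg hkl hN, Nat.descFactorial_of_lt hN]
  rw [card_subcubeLayer hdisj hP, ← hkl]
  exact choose_mul_descFactorial_add hP hN

theorem stmt_2_general (hdisj : Disjoint P N) (hkl : k + l = Fintype.card α) {a b : ℕ}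
    (hP : ∀ i < #P, k - i ≤ a * (l - i)) (hN : ∀ i < #N, l - i ≤ b * (k - i)) :
    #(subcubeLayer P N k) ≤ a ^ #P * b ^ #N * #(subcubeLayer P N l) := by
  have hpos : 0 < (k + l).descFactorial (#P + #N) := by
    rw [Nat.descFactorial_pos, hkl, ← card_union_of_disjoint hdisj]
    exact card_le_univ _
  have hlayer_l : #(subcubeLayer P N l) * (k + l).descFactorial (#P + #N) =
      (k + l).choose k * (l.descFactorial #P * k.descFactorial #N) := by
    rw [Nat.choose_symm_add, add_comm k l]
    exact card_subcubeLayer_mul_descFactorial hdisj (add_comm k l ▸ hkl)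
  refine Nat.le_of_mul_le_mul_right ?_ hpos
  calc #(subcubeLayer P N k) * (k + l).descFactorial (#P + #N)
      = (k + l).choose k * (k.descFactorial #P * l.descFactorial #N) :=
        card_subcubeLayer_mul_descFactorial hdisj hkl
    _ ≤ (k + l).choose k *
          (a ^ #P * l.descFactorial #P * (b ^ #N * k.descFactorial #N)) := by
        gcongr
        · exact descFactorial_le_pow_mul_descFactorial hP
        · exact descFactorial_le_pow_mul_descFactorial hN
    _ = a ^ #P * b ^ #N * ((k + l).choose k * (l.descFactorial #P * k.descFactorial #N)) := by
        ring
    _ = a ^ #P * b ^ #N * #(subcubeLayer P N l) * (k + l).descFactorial (#P + #N) := by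
        rw [← hlayer_l, ← mul_assoc]

end SubcubeLayer

/-- Fact 3.2. Let `3 ∣ m`, `m > 0`, and let `P, N ⊆ [m]` be disjoint with
`|P| + |N| = w ≤ m/7`. Then for each `z ∈ {0,1}`,
`#{A ⊆ [m] : |A| = (1+z)m/3, P ⊆ A, A ∩ N = ∅} ≤ 3^w · #{A ⊆ [m] : |A| = (2−z)m/3, P ⊆ A, A ∩ N = ∅}`,
i.e. `C(G_z) ≤ 3^w · C(G_{1−z})` for the conjunction `C` with positive literals `P` and
negative literals `N`. -/
theorem stmt_2 (m : ℕ) (hm : 0 < m) (h3 : 3 ∣ m) (P N : Finset (Fin m))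
    (hdisj : Disjoint P N) (w : ℕ) (hw : P.card + N.card = w) (hwm : 7 * w ≤ m) :
    ∀ z : Bool,
      #{A : Finset (Fin m) | A.card = (if z then 2 else 1) * (m / 3) ∧ P ⊆ A ∧ Disjoint A N}
        ≤ 3 ^ w *
      #{A : Finset (Fin m) | A.card = (if z then 1 else 2) * (m / 3) ∧ P ⊆ A ∧ Disjoint A N} := by
  rw [← hw, pow_add]
  rintro (_ | _) <;> exact stmt_2_general hdisj (by simp; omega) (by simp; omega) (by simp; omega)
end

section
/- Let m be a positive integer divisible by 3 and let w ≤ m be a natural number. Then 3^w · binom(m − w, m/3) ≤ 2^w · binom(m, m/3), where binom denotes the binomial coefficient. -/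
/-!
Since `binom(n, k) / binom(n + 1, k) = (n + 1 - k) / (n + 1)`, removing one element from the ground
set multiplies the binomial coefficient by `1 - k / (n + 1)`. Going down from `m`, each of these
factors is at most the first one, `1 - k / m`, which equals `2 / 3` when `m = 3 * k`.
-/

theorem mul_sub_le_mul_of_le {p q k m n : ℕ} (hnm : n ≤ m) (h : p * (m - k) ≤ q * m) :
    p * (n - k) ≤ q * n := by
  obtain rfl | hm := m.eq_zero_or_pos
  · simp [Nat.le_zero.mp hnm]
  have cross : (n - k) * m ≤ (m - k) * n := by
    rw [Nat.sub_mul, Nat.sub_mul, Nat.mul_comm m n]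
    gcongr
  refine Nat.le_of_mul_le_mul_right ?_ hm
  calc p * (n - k) * m = p * ((n - k) * m) := by ring
    _ ≤ p * ((m - k) * n) := by gcongr
    _ = p * (m - k) * n := by ring
    _ ≤ q * m * n := by gcongr
    _ = q * n * m := by ring

theorem mul_choose_le_mul_choose_succ {p q k n : ℕ} (h : p * (n + 1 - k) ≤ q * (n + 1)) :
    p * n.choose k ≤ q * (n + 1).choose k := by
  refine Nat.le_of_mul_le_mul_right ?_ n.succ_pos
  calc p * n.choose k * (n + 1) = p * (n.choose k * (n + 1)) := by ring
    _ = p * ((n + 1).choose k * (n + 1 - k)) := by rw [Nat.choose_mul_succ_eq]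
    _ = p * (n + 1 - k) * (n + 1).choose k := by ring
    _ ≤ q * (n + 1) * (n + 1).choose k := by gcongr
    _ = q * (n + 1).choose k * (n + 1) := by ring

theorem stmt_3_general {p q k m w : ℕ} (h : p * (m - k) ≤ q * m) (hw : w ≤ m) :
    p ^ w * (m - w).choose k ≤ q ^ w * m.choose k := by
  induction w generalizing m with
  | zero => simp
  | succ w ih =>
    obtain ⟨n, rfl⟩ := Nat.exists_eq_add_one_of_ne_zero (Nat.ne_zero_of_lt hw)
    have ih_n : p ^ w * (n - w).choose k ≤ q ^ w * n.choose k :=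
      ih (mul_sub_le_mul_of_le n.le_succ h) (Nat.le_of_succ_le_succ hw)
    rw [Nat.add_sub_add_right]
    calc p ^ (w + 1) * (n - w).choose k = p * (p ^ w * (n - w).choose k) := by ring
      _ ≤ p * (q ^ w * n.choose k) := by gcongr
      _ = q ^ w * (p * n.choose k) := by ring
      _ ≤ q ^ w * (q * (n + 1).choose k) :=
        Nat.mul_le_mul_left _ (mul_choose_le_mul_choose_succ h)
      _ = q ^ (w + 1) * (n + 1).choose k := by ring

/-- If `m > 0` is divisible by 3 and `w ≤ m`, then
`3^w · binom(m−w, m/3) ≤ 2^w · binom(m, m/3)`. -/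
theorem stmt_3 (m w : ℕ) (hm : 0 < m) (h3 : 3 ∣ m) (hw : w ≤ m) :
    3 ^ w * (m - w).choose (m / 3) ≤ 2 ^ w * m.choose (m / 3) :=
  stmt_3_general (by omega) hw
end

section
/- Let m be a positive integer divisible by 3 and let w be a natural number with w ≤ m/7. Then 9^w · binom(m − w, m/3 − w) ≥ 2^w · binom(m, m/3), where binom denotes the binomial coefficient. -/
/-!
Going from `binom(n + 1, k + 1)` to `binom(n, k)` multiplies by `(k + 1) / (n + 1)`. For `k ≤ n`
this ratio only grows when `n` and `k` are increased by the same amount, so over `w` consecutive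
steps it is smallest at the lowest one, and `a / b ≤ (k + 1) / (n + 1)` there gives the factor
`(a / b) ^ w`. Starting from `binom(m, ⌊m / 3⌋)`, the condition `w ≤ m / 7` keeps this smallest
ratio at least `2 / 9`.
-/

theorem mul_choose_succ_succ_le_mul_choose {a b n k : ℕ} (h : a * (n + 1) ≤ b * (k + 1)) :
    a * (n + 1).choose (k + 1) ≤ b * n.choose k := by
  refine Nat.le_of_mul_le_mul_right ?_ k.succ_pos
  calc a * (n + 1).choose (k + 1) * (k + 1)
      = a * (n + 1) * n.choose k := by rw [mul_assoc, ← Nat.add_one_mul_choose_eq, mul_assoc]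
    _ ≤ b * (k + 1) * n.choose k := Nat.mul_le_mul_right _ h
    _ = b * n.choose k * (k + 1) := mul_right_comm _ _ _

theorem pow_mul_choose_add_add_le_pow_mul_choose {a b n k : ℕ} (h : a * (n + 1) ≤ b * (k + 1))
    (w : ℕ) : a ^ w * (n + w).choose (k + w) ≤ b ^ w * n.choose k := by
  obtain hnk | hkn := lt_or_ge n k
  · simp [Nat.choose_eq_zero_of_lt, hnk]
  have hab : a ≤ b :=
    Nat.le_of_mul_le_mul_right (h.trans (Nat.mul_le_mul_left b (Nat.succ_le_succ hkn))) n.succ_pos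
  induction w with
  | zero => simp
  | succ w ih =>
    have hratio : a * (n + w + 1) ≤ b * (k + w + 1) := by
      linarith [Nat.mul_le_mul_right w hab]
    calc a ^ (w + 1) * (n + w + 1).choose (k + w + 1)
        = a ^ w * (a * (n + w + 1).choose (k + w + 1)) := by rw [pow_succ, mul_assoc]
      _ ≤ a ^ w * (b * (n + w).choose (k + w)) :=
        Nat.mul_le_mul_left _ (mul_choose_succ_succ_le_mul_choose hratio)
      _ = b * (a ^ w * (n + w).choose (k + w)) := mul_left_comm _ _ _
      _ ≤ b * (b ^ w * n.choose k) := Nat.mul_le_mul_left b ih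
      _ = b ^ (w + 1) * n.choose k := by rw [pow_succ', mul_assoc]

theorem stmt_4_general (m w : ℕ) (hw : 7 * w ≤ m) :
    2 ^ w * m.choose (m / 3) ≤ 9 ^ w * (m - w).choose (m / 3 - w) := by
  have hwm : w ≤ m := by lia
  have hwk : w ≤ m / 3 := by lia
  have hratio : 2 * (m - w + 1) ≤ 9 * (m / 3 - w + 1) := by lia
  simpa only [Nat.sub_add_cancel hwm, Nat.sub_add_cancel hwk] using
    pow_mul_choose_add_add_le_pow_mul_choose hratio w

/-- If `m > 0` is divisible by 3 and `w ≤ m/7`, then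
`9^w · binom(m−w, m/3−w) ≥ 2^w · binom(m, m/3)`. -/
theorem stmt_4 (m w : ℕ) (hm : 0 < m) (h3 : 3 ∣ m) (hw : 7 * w ≤ m) :
    2 ^ w * m.choose (m / 3) ≤ 9 ^ w * (m - w).choose (m / 3 - w) :=
  stmt_4_general m w hw
end

section
/- Let Ω be a finite probability space with probability mass function μ, and let P₀, P₁, P₂ : Ω → ℝ be nonnegative functions with E[P₁] > 0. Let 0 < ε ≤ 1/10 and set δ := 2·√ε. If E[P₀] ≤ ε and E[P₁] ≥ 1 − ε and E[P₂] ≤ 1 (all expectations with respect to μ), then there exists an outcome o ∈ Ω with μ(o) > 0 such that P₀(o) ≤ δ·P₁(o), P₂(o) ≤ (1+δ)·P₁(o), and P₁(o) > 0. -/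
/-!
If `P₀ / δ + P₂ / (1 + δ) < P₁` at an outcome, then that outcome is as required, because both terms
on the left are nonnegative. By linearity it is therefore enough that the expectations satisfy
`E[P₀] / δ + E[P₂] / (1 + δ) < E[P₁]`, for which `ε / δ + 1 / (1 + δ) < 1 - ε` suffices. With
`δ = 2√ε` and `ε > 0`, the latter holds exactly when `ε < 1 / 4`.
-/

open MeasureTheory Filter

lemma pos_and_forall_lt_mul_of_sum_div_lt {ι K : Type*} [Field K] [LinearOrder K]
    [IsStrictOrderedRing K] {s : Finset ι} {a c : ι → K} {x : K} (hc : ∀ i ∈ s, 0 < c i)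
    (ha : ∀ i ∈ s, 0 ≤ a i) (h : ∑ i ∈ s, a i / c i < x) :
    0 < x ∧ ∀ i ∈ s, a i < c i * x := by
  have hdiv_nonneg : ∀ i ∈ s, 0 ≤ a i / c i := fun i hi ↦ div_nonneg (ha i hi) (hc i hi).le
  refine ⟨(Finset.sum_nonneg hdiv_nonneg).trans_lt h, fun i hi ↦ ?_⟩
  rw [← div_lt_iff₀' (hc i hi)]
  exact (Finset.single_le_sum hdiv_nonneg hi).trans_lt h

section Integral

variable {Ω : Type*} [MeasurableSpace Ω] {μ : Measure Ω}

lemma frequently_ae_lt_of_integral_lt {f g : Ω → ℝ} (hf : Integrable f μ) (hg : Integrable g μ)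
    (h : ∫ o, f o ∂μ < ∫ o, g o ∂μ) : ∃ᶠ o in ae μ, f o < g o := by
  contrapose! h
  exact integral_mono_ae hg hf h

lemma frequently_ae_forall_lt_mul_of_sum_integral_div_lt {ι : Type*} {s : Finset ι}
    {f : ι → Ω → ℝ} {g : Ω → ℝ} {c : ι → ℝ} (hc : ∀ i ∈ s, 0 < c i)
    (hf : ∀ i ∈ s, Integrable (f i) μ) (hf_nonneg : ∀ i ∈ s, 0 ≤ᵐ[μ] f i) (hg : Integrable g μ)
    (h : ∑ i ∈ s, (∫ o, f i o ∂μ) / c i < ∫ o, g o ∂μ) :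
    ∃ᶠ o in ae μ, 0 < g o ∧ ∀ i ∈ s, f i o < c i * g o := by
  have hf_div : ∀ i ∈ s, Integrable (fun o ↦ f i o / c i) μ := fun i hi ↦ (hf i hi).div_const _
  have integral_lt : ∫ o, ∑ i ∈ s, f i o / c i ∂μ < ∫ o, g o ∂μ := by
    simpa only [integral_finsetSum s hf_div, integral_div] using h
  have all_nonneg : ∀ᵐ o ∂μ, ∀ i ∈ s, 0 ≤ f i o := (eventually_all_finset s).mpr hf_nonneg
  refine ((frequently_ae_lt_of_integral_lt (integrable_finsetSum s hf_div) hg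
    integral_lt).and_eventually all_nonneg).mono ?_
  rintro o ⟨sum_lt, nonneg⟩
  exact pos_and_forall_lt_mul_of_sum_div_lt hc nonneg sum_lt

end Integral

lemma exists_pmf_toReal_eq {Ω : Type*} [Fintype Ω] {w : Ω → ℝ} (hw : ∀ o, 0 ≤ w o)
    (hsum : ∑ o, w o = 1) :
    ∃ p : PMF Ω, (fun o ↦ (p o).toReal) = w := by
  have ofReal_sum : ∑ o, ENNReal.ofReal (w o) = 1 := by
    rw [← ENNReal.ofReal_sum_of_nonneg fun o _ ↦ hw o, hsum, ENNReal.ofReal_one]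
  exact ⟨PMF.ofFintype _ ofReal_sum, funext fun o ↦ ENNReal.toReal_ofReal (hw o)⟩

lemma exists_toReal_pos_and_of_frequently_ae_toMeasure {Ω : Type*} [MeasurableSpace Ω]
    [MeasurableSingletonClass Ω] {p : PMF Ω} {q : Ω → Prop}
    (h : ∃ᶠ o in ae p.toMeasure, q o) : ∃ o, 0 < (p o).toReal ∧ q o := by
  contrapose! h
  rw [← p.restrict_toMeasure_support]
  filter_upwards [ae_restrict_mem p.support_countable.measurableSet] with o ho
  exact h o (ENNReal.toReal_pos ho (p.apply_ne_top o))

lemma div_two_mul_sqrt_add_one_div_lt_one_sub {ε : ℝ} (hε_pos : 0 < ε) (hε_lt : ε < 1 / 4) :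
    ε / (2 * √ε) + 1 / (1 + 2 * √ε) < 1 - ε := by
  obtain ⟨r, hr, rfl⟩ : ∃ r : ℝ, 0 < r ∧ r ^ 2 = ε :=
    ⟨√ε, Real.sqrt_pos.mpr hε_pos, Real.sq_sqrt hε_pos.le⟩
  have hr_lt : r < 1 / 2 := by nlinarith
  rw [Real.sqrt_sq hr.le, ← sub_pos]
  have gap_eq : 1 - r ^ 2 - (r ^ 2 / (2 * r) + 1 / (1 + 2 * r)) =
      r * (1 - 2 * r) * (3 + 2 * r) / (2 * (1 + 2 * r)) := by
    field_simp
    ring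
  rw [gap_eq]
  have one_sub_pos : 0 < 1 - 2 * r := by linarith
  positivity

theorem stmt_5_general {Ω : Type*} [MeasurableSpace Ω] {μ : Measure Ω} {P₀ P₁ P₂ : Ω → ℝ}
    (hP₀ : Integrable P₀ μ) (hP₁ : Integrable P₁ μ) (hP₂ : Integrable P₂ μ)
    (h₀ : 0 ≤ᵐ[μ] P₀) (h₂ : 0 ≤ᵐ[μ] P₂) {ε : ℝ} (hε_pos : 0 < ε) (hε_lt : ε < 1 / 4)
    (hE₀ : ∫ o, P₀ o ∂μ ≤ ε) (hE₁ : 1 - ε ≤ ∫ o, P₁ o ∂μ) (hE₂ : ∫ o, P₂ o ∂μ ≤ 1) :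
    ∃ᶠ o in ae μ, P₀ o < 2 * √ε * P₁ o ∧ P₂ o < (1 + 2 * √ε) * P₁ o ∧ 0 < P₁ o := by
  have sum_lt : (∫ o, P₀ o ∂μ) / (2 * √ε) + (∫ o, P₂ o ∂μ) / (1 + 2 * √ε) < ∫ o, P₁ o ∂μ :=
    calc
      _ ≤ ε / (2 * √ε) + 1 / (1 + 2 * √ε) := by gcongr
      _ < 1 - ε := div_two_mul_sqrt_add_one_div_lt_one_sub hε_pos hε_lt
      _ ≤ ∫ o, P₁ o ∂μ := hE₁
  have hδ : 0 < 2 * √ε := by positivity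
  have hδ' : 0 < 1 + 2 * √ε := by positivity
  have frequently_lt :=
    frequently_ae_forall_lt_mul_of_sum_integral_div_lt (μ := μ) (s := Finset.univ)
      (f := ![P₀, P₂]) (g := P₁) (c := ![2 * √ε, 1 + 2 * √ε])
      (by simp [Fin.forall_fin_two, hδ, hδ']) (by simp [Fin.forall_fin_two, hP₀, hP₂])
      (by simp [Fin.forall_fin_two, h₀, h₂]) hP₁ (by simpa [Fin.sum_univ_two] using sum_lt)
  exact frequently_lt.mono fun o ⟨hpos, hlt⟩ ↦
    ⟨hlt 0 (Finset.mem_univ _), hlt 1 (Finset.mem_univ _), hpos⟩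

/-- Fact 4.2. Let `Ω` be a finite probability space with probability mass
function `μ`, and `P₀, P₁, P₂ : Ω → ℝ` nonnegative with `E[P₁] > 0`. If `0 < ε ≤ 1/10`,
`E[P₀] ≤ ε`, `E[P₁] ≥ 1 − ε`, `E[P₂] ≤ 1`, then some outcome `o` with `μ o > 0` satisfies
`P₀ o ≤ δ·P₁ o`, `P₂ o ≤ (1+δ)·P₁ o`, and `P₁ o > 0`, where `δ = 2√ε`. -/
theorem stmt_5 {Ω : Type*} [Fintype Ω] (μ : Ω → ℝ)
    (hμ0 : ∀ o, 0 ≤ μ o) (hμ1 : ∑ o, μ o = 1)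
    (P₀ P₁ P₂ : Ω → ℝ) (h₀ : ∀ o, 0 ≤ P₀ o) (h₁ : ∀ o, 0 ≤ P₁ o) (h₂ : ∀ o, 0 ≤ P₂ o)
    (ε : ℝ) (hε0 : 0 < ε) (hε1 : ε ≤ 1 / 10)
    (hE1pos : 0 < ∑ o, μ o * P₁ o)
    (hE0 : ∑ o, μ o * P₀ o ≤ ε)
    (hE1 : 1 - ε ≤ ∑ o, μ o * P₁ o)
    (hE2 : ∑ o, μ o * P₂ o ≤ 1) :
    ∃ o : Ω, 0 < μ o ∧ P₀ o ≤ 2 * Real.sqrt ε * P₁ o ∧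
      P₂ o ≤ (1 + 2 * Real.sqrt ε) * P₁ o ∧ 0 < P₁ o := by
  let : MeasurableSpace Ω := ⊤
  obtain ⟨p, rfl⟩ := exists_pmf_toReal_eq hμ0 hμ1
  simp only [← smul_eq_mul (a := (p _).toReal), ← p.integral_eq_sum] at hE0 hE1 hE2
  obtain ⟨o, ho, hlt₀, hlt₂, hpos⟩ := exists_toReal_pos_and_of_frequently_ae_toMeasure <|
    stmt_5_general .of_finite .of_finite .of_finite (ae_of_all _ h₀) (ae_of_all _ h₂) hε0
      (by linarith) hE0 hE1 hE2
  exact ⟨o, ho, hlt₀.le, hlt₂.le, hpos⟩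
end

section
/- There exists n₀ ∈ ℕ such that for all even integers n ≥ n₀ the following holds. Let b be an integer with 0 ≤ b ≤ n/2, let A be a finite set with |A| = n − b, and let c : A → ℝ satisfy 0 ≤ c(i) ≤ 1 for all i ∈ A and |{i ∈ A : c(i) < n^{−2/5}}| ≤ n/4. For a subset S ⊆ A write c_S := ∏_{i∈S} c(i). Define q₁ := (1/binom(n − b, n/2 − b)) · Σ_{S ⊆ A, |S| = n/2 − b} c_S and q₂ := (1/binom(n − b, n/2 + 1 − b)) · Σ_{S ⊆ A, |S| = n/2 + 1 − b} c_S, i.e., expectations of c_S over uniformly random subsets of the respective sizes. Then 0 < q₁ ≤ √n · q₂. -/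
open Finset

/-!
Write `E k` for the mean of `∏ i ∈ S, c i` over the `k`-subsets `S` of `A`. A uniformly random
`(k + 1)`-subset is a uniformly random `k`-subset `S` together with a uniformly random further
element of `A`, so `E (k + 1)` is the mean over `S` of `(∏ i ∈ S, c i) * 𝔼 i ∈ A \ S, c i`. With
`k = n / 2 - b`, every complement `A \ S` has at least `n / 2` elements; if at most `δ n` elements
of `A` have `c i < n ^ (-α)`, the inner mean is at least `(1 - 2 δ) n ^ (-α)`, and for `δ < 1 / 2`
and `α < β` this eventually exceeds `n ^ (-β)`.
-/

open Filter (atTop eventually_atTop eventually_gt_atTop)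
open scoped BigOperators

section Expect

variable {ι M : Type*} [AddCommMonoid M] [Module ℚ≥0 M]

lemma expect_sigma_of_card_eq {κ : ι → Type*} {s : Finset ι} {t : ∀ i, Finset (κ i)} {d : ℕ}
    (ht : ∀ i ∈ s, #(t i) = d) (f : (Σ i, κ i) → M) :
    𝔼 x ∈ s.sigma t, f x = 𝔼 i ∈ s, 𝔼 j ∈ t i, f ⟨i, j⟩ := by
  have hcard : #(s.sigma t) = #s * d := by rw [card_sigma, sum_const_nat ht]
  have hfiber : ∀ i ∈ s, 𝔼 j ∈ t i, f ⟨i, j⟩ = (d : ℚ≥0)⁻¹ • ∑ j ∈ t i, f ⟨i, j⟩ :=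
    fun i hi ↦ by rw [expect, ht i hi]
  rw [expect_congr rfl hfiber, expect, expect, hcard, sum_sigma, ← smul_sum, smul_smul,
    Nat.cast_mul, mul_inv]

variable [DecidableEq ι]

lemma expect_powersetCard_succ (A : Finset ι) (k : ℕ) (f : Finset ι → ι → M) :
    𝔼 T ∈ A.powersetCard (k + 1), 𝔼 i ∈ T, f (T.erase i) i
      = 𝔼 S ∈ A.powersetCard k, 𝔼 i ∈ A \ S, f S i := by
  have hcompl : ∀ S ∈ A.powersetCard k, #(A \ S) = #A - k := fun S hS ↦ by
    obtain ⟨hSA, hSk⟩ := mem_powersetCard.1 hS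
    rw [card_sdiff_of_subset hSA, hSk]
  rw [← expect_sigma_of_card_eq (fun T hT ↦ (mem_powersetCard.1 hT).2)
      fun x : Σ _ : Finset ι, ι ↦ f (x.1.erase x.2) x.2,
    ← expect_sigma_of_card_eq hcompl fun x : Σ _ : Finset ι, ι ↦ f x.1 x.2]
  refine expect_nbij' (fun x ↦ ⟨x.1.erase x.2, x.2⟩) (fun x ↦ ⟨insert x.2 x.1, x.2⟩) ?_ ?_ ?_ ?_
    fun _ _ ↦ rfl
  · rintro ⟨T, i⟩ h
    simp only [mem_sigma, mem_powersetCard, mem_sdiff] at h ⊢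
    obtain ⟨⟨hTA, hTk⟩, hi⟩ := h
    exact ⟨⟨(erase_subset i T).trans hTA, by rw [card_erase_of_mem hi, hTk, Nat.add_sub_cancel]⟩,
      hTA hi, notMem_erase i T⟩
  · rintro ⟨S, i⟩ h
    simp only [mem_sigma, mem_powersetCard, mem_sdiff] at h ⊢
    obtain ⟨⟨hSA, hSk⟩, hiA, hiS⟩ := h
    exact ⟨⟨insert_subset hiA hSA, by rw [card_insert_of_notMem hiS, hSk]⟩, mem_insert_self i S⟩
  · rintro ⟨T, i⟩ h
    simp only [insert_erase (mem_sigma.1 h).2]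
  · rintro ⟨S, i⟩ h
    simp only [erase_insert (mem_sdiff.1 (mem_sigma.1 h).2).2]

end Expect

lemma expect_powersetCard_succ_prod {ι R : Type*} [DecidableEq ι] [CommSemiring R] [Module ℚ≥0 R]
    [SMulCommClass ℚ≥0 R R] (A : Finset ι) (k : ℕ) (c : ι → R) :
    𝔼 T ∈ A.powersetCard (k + 1), ∏ i ∈ T, c i
      = 𝔼 S ∈ A.powersetCard k, (∏ i ∈ S, c i) * 𝔼 i ∈ A \ S, c i := by
  simp only [mul_expect]
  rw [← expect_powersetCard_succ A k fun S i ↦ (∏ j ∈ S, c j) * c i]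
  refine expect_congr rfl fun T hT ↦ ?_
  have hT_nonempty : T.Nonempty := card_pos.1 <| by rw [(mem_powersetCard.1 hT).2]; omega
  rw [expect_congr rfl fun i hi ↦ prod_erase_mul T c hi, expect_const hT_nonempty]

lemma le_card_filter_lt_of_add_card_filter_lt_le {ι α : Type*} [LinearOrder α] {A : Finset ι}
    {c : ι → α} {a t : α} {k : ℕ} (hat : a < t) (h : k + #{i ∈ A | c i < t} ≤ #A) :
    k ≤ #{i ∈ A | a < c i} := by
  have hle : #{i ∈ A | ¬c i < t} ≤ #{i ∈ A | a < c i} :=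
    card_le_card <| monotone_filter_right A fun i _ hi ↦ hat.trans_le (not_lt.1 hi)
  have hcard := card_filter_add_card_filter_not (s := A) (c · < t)
  omega

section LinearOrderedField

variable {ι K : Type*} [Field K] [LinearOrder K] [IsStrictOrderedRing K]
  {A : Finset ι} {c : ι → K} {t δ : K} {k : ℕ}

lemma expect_prod_powersetCard_pos (hc : ∀ i ∈ A, 0 ≤ c i) (hk : k ≤ #{i ∈ A | 0 < c i}) :
    0 < 𝔼 S ∈ A.powersetCard k, ∏ i ∈ S, c i := by
  obtain ⟨S, hS, hSk⟩ := exists_subset_card_eq hk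
  refine expect_pos' (fun T hT ↦ prod_nonneg fun i hi ↦ hc i ((mem_powersetCard.1 hT).1 hi))
    ⟨S, mem_powersetCard.2 ⟨hS.trans (filter_subset _ _), hSk⟩, ?_⟩
  exact prod_pos fun i hi ↦ (mem_filter.1 (hS hi)).2

lemma one_sub_mul_le_expect_of_card_filter_lt_le (hA : A.Nonempty) (hc : ∀ i ∈ A, 0 ≤ c i)
    (ht : 0 ≤ t) (hsmall : (#{i ∈ A | c i < t} : K) ≤ δ * #A) :
    (1 - δ) * t ≤ 𝔼 i ∈ A, c i := by
  have hcard : (#{i ∈ A | c i < t} : K) + #{i ∈ A | ¬c i < t} = #A := by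
    exact_mod_cast card_filter_add_card_filter_not (s := A) (c · < t)
  rw [expect_eq_sum_div_card, le_div_iff₀ (Nat.cast_pos.2 hA.card_pos)]
  calc (1 - δ) * t * #A = (#A - δ * #A) * t := by ring
    _ ≤ #{i ∈ A | ¬c i < t} * t := by gcongr; linarith
    _ ≤ ∑ i ∈ A with ¬c i < t, c i := by
      rw [← nsmul_eq_mul]
      exact card_nsmul_le_sum _ _ _ fun i hi ↦ not_lt.1 (mem_filter.1 hi).2
    _ ≤ ∑ i ∈ A, c i :=
      sum_le_sum_of_subset_of_nonneg (filter_subset _ _) fun i hi _ ↦ hc i hi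

lemma one_sub_mul_expect_prod_powersetCard_le (hk : k < #A) (hc : ∀ i ∈ A, 0 ≤ c i) (ht : 0 ≤ t)
    (hsmall : (#{i ∈ A | c i < t} : K) ≤ δ * (#A - k)) :
    (1 - δ) * t * 𝔼 S ∈ A.powersetCard k, ∏ i ∈ S, c i
      ≤ 𝔼 T ∈ A.powersetCard (k + 1), ∏ i ∈ T, c i := by
  classical
  rw [expect_powersetCard_succ_prod, mul_expect]
  refine expect_le_expect fun S hS ↦ ?_
  obtain ⟨hSA, hSk⟩ := mem_powersetCard.1 hS
  have hcard : #(A \ S) = #A - k := by rw [card_sdiff_of_subset hSA, hSk]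
  have hcompl : (1 - δ) * t ≤ 𝔼 i ∈ A \ S, c i := by
    refine one_sub_mul_le_expect_of_card_filter_lt_le (card_pos.1 (by omega))
      (fun i hi ↦ hc i (mem_sdiff.1 hi).1) ht ?_
    rw [hcard, Nat.cast_sub hk.le]
    refine le_trans ?_ hsmall
    gcongr
    exact sdiff_subset
  rw [mul_comm]
  exact mul_le_mul_of_nonneg_left hcompl (prod_nonneg fun i hi ↦ hc i (hSA hi))

end LinearOrderedField

lemma eventually_one_le_rpow_mul_const_mul_rpow_neg {α β ε : ℝ} (hαβ : α < β) (hε : 0 < ε) :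
    ∀ᶠ x : ℝ in atTop, 1 ≤ x ^ β * (ε * x ^ (-α)) := by
  have hlarge := (tendsto_rpow_atTop (sub_pos.2 hαβ)).eventually_ge_atTop ε⁻¹
  filter_upwards [hlarge, eventually_gt_atTop 0] with x hx hx_pos
  calc 1 = ε * ε⁻¹ := (mul_inv_cancel₀ hε.ne').symm
    _ ≤ ε * x ^ (β - α) := by gcongr
    _ = x ^ β * (ε * x ^ (-α)) := by rw [sub_eq_add_neg, Real.rpow_add hx_pos]; ring

theorem stmt_8_general {ι : Type*} {α β δ : ℝ} (hαβ : α < β) (hδ : δ < 1 / 2) :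
    ∀ᶠ n : ℕ in atTop, ∀ b ≤ n / 2, ∀ (A : Finset ι) (c : ι → ℝ), #A = n - b →
      (∀ i ∈ A, 0 ≤ c i) → (#{i ∈ A | c i < (n : ℝ) ^ (-α)} : ℝ) ≤ δ * n →
      0 < 𝔼 S ∈ A.powersetCard (n / 2 - b), ∏ i ∈ S, c i ∧
        𝔼 S ∈ A.powersetCard (n / 2 - b), ∏ i ∈ S, c i
          ≤ (n : ℝ) ^ β * 𝔼 S ∈ A.powersetCard (n / 2 + 1 - b), ∏ i ∈ S, c i := by
  have hlarge := tendsto_natCast_atTop_atTop.eventually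
    (eventually_one_le_rpow_mul_const_mul_rpow_neg hαβ (ε := 1 - 2 * δ) (by linarith))
  filter_upwards [hlarge, eventually_gt_atTop 0] with n hn hn_pos b hb A c hA hc hsmall
  set t := (n : ℝ) ^ (-α)
  have ht : 0 < t := Real.rpow_pos_of_pos (Nat.cast_pos.2 hn_pos) _
  have hδ_nonneg : 0 ≤ δ :=
    nonneg_of_mul_nonneg_left ((Nat.cast_nonneg _).trans hsmall) (Nat.cast_pos.2 hn_pos)
  have hn_half : 2 * ((n / 2 : ℕ) : ℝ) ≤ n := by exact_mod_cast Nat.mul_div_le n 2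
  have hcompl : (#A : ℝ) - (n / 2 - b : ℕ) = n - (n / 2 : ℕ) := by
    rw [hA, Nat.cast_sub (by omega), Nat.cast_sub hb]
    ring
  have hsmall_compl : (#{i ∈ A | c i < t} : ℝ) ≤ 2 * δ * (#A - (n / 2 - b : ℕ)) := by
    calc (#{i ∈ A | c i < t} : ℝ) ≤ δ * n := hsmall
      _ ≤ δ * (2 * (n - (n / 2 : ℕ))) := by gcongr; linarith
      _ = 2 * δ * (#A - (n / 2 - b : ℕ)) := by rw [hcompl]; ring
  have hk : n / 2 - b + #{i ∈ A | c i < t} ≤ #A := by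
    have htwice : 2 * (#{i ∈ A | c i < t} : ℝ) ≤ n := by
      calc 2 * (#{i ∈ A | c i < t} : ℝ) ≤ 2 * (1 / 2 * n) := by grw [hsmall, hδ]
        _ = n := by ring
    norm_cast at htwice
    omega
  have hpos := expect_prod_powersetCard_pos hc
    (le_card_filter_lt_of_add_card_filter_lt_le ht hk)
  have hstep := one_sub_mul_expect_prod_powersetCard_le (k := n / 2 - b) (by omega) hc ht.le
    hsmall_compl
  rw [← Nat.sub_add_comm hb] at hstep
  refine ⟨hpos, ?_⟩
  set q := 𝔼 S ∈ A.powersetCard (n / 2 - b), ∏ i ∈ S, c i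
  calc q ≤ n ^ β * ((1 - 2 * δ) * t) * q := le_mul_of_one_le_left hpos.le hn
    _ = n ^ β * ((1 - 2 * δ) * t * q) := mul_assoc _ _ _
    _ ≤ _ := by gcongr

/-- Claim 4.5(ii). There is `n₀` such that for all even `n ≥ n₀`:
if `0 ≤ b ≤ n/2`, `A` is a finite set with `|A| = n − b`, `c : A → [0,1]` with at most
`n/4` elements satisfying `c i < n^{−2/5}`, and `q₁, q₂` are the expectations of
`∏_{i∈S} c i` over uniformly random subsets `S ⊆ A` of sizes `n/2 − b` and `n/2 + 1 − b`
respectively, then `0 < q₁ ≤ √n · q₂`. -/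
theorem stmt_8 :
    ∃ n₀ : ℕ, ∀ n : ℕ, n₀ ≤ n → 2 ∣ n →
      ∀ b : ℕ, b ≤ n / 2 →
      ∀ (A : Finset ℕ) (c : ℕ → ℝ), A.card = n - b →
      (∀ i ∈ A, 0 ≤ c i ∧ c i ≤ 1) →
      ((#{i ∈ A | c i < (n : ℝ) ^ (-(2 / 5) : ℝ)} : ℝ) ≤ (n : ℝ) / 4) →
      0 < (∑ S ∈ A.powersetCard (n / 2 - b), ∏ i ∈ S, c i) / ((n - b).choose (n / 2 - b) : ℝ) ∧
        (∑ S ∈ A.powersetCard (n / 2 - b), ∏ i ∈ S, c i) / ((n - b).choose (n / 2 - b) : ℝ)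
          ≤ Real.sqrt n *
            ((∑ S ∈ A.powersetCard (n / 2 + 1 - b), ∏ i ∈ S, c i)
              / ((n - b).choose (n / 2 + 1 - b) : ℝ)) := by
  obtain ⟨n₀, h⟩ := eventually_atTop.1 <| stmt_8_general (ι := ℕ) (α := 2 / 5) (β := 1 / 2)
    (δ := 1 / 4) (by norm_num) (by norm_num)
  refine ⟨n₀, fun n hn _ b hb A c hA hc hsmall ↦ ?_⟩
  simpa only [expect_eq_sum_div_card, card_powersetCard, hA, Real.sqrt_eq_rpow] using
    h n hn b hb A c hA (fun i hi ↦ (hc i hi).1) (hsmall.trans_eq (by ring))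
end
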